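/- Let S be a Γ-semiring with a left unity and a right unity and let n be a positive integer. Then the map μ ↦ μ_n, where μ_n is the fuzzy subset of the matrix Γ_n-semiring S_n defined by μ_n(A) = min{ μ(A_{ij}) : 1 ≤ i, j ≤ n }, is an inclusion-preserving bijection from the set of fuzzy ideals of S onto the set of fuzzy ideals of S_n. -/

import Mathlib

/-!
Over a fixed threshold, a fuzzy ideal is an ordinary ideal, and the theorem is the classical
correspondence between ideals of a semiring with unity and ideals of its matrix semiring.

Injectivity: `μ` is recovered from `μₙ` on constant matrices. Surjectivity: for a fuzzy ideal `τ`
of `Sₙ`, put `μ x = τ (single i₀ i₀ x)`. The unities give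
`x = ∑ₚ ∑_q (eₚ δₚ x) γ_q f_q`, so multiplying a matrix `A` on both sides by matrices with a single
nonzero entry and summing moves the entry `A i j` to any position `(i', j')`, annihilating all the
other entries. Hence `τ A ≤ τ (single i' j' (A i j))` (`IsFuzzyIdealMatrix.le_single`). Applied to
`A` this gives `τ A ≤ μₙ A`, and applied to the matrices `single i₀ i₀ (A i j)`, together with
`A = ∑ single i j (A i j)`, it gives `μₙ A ≤ τ A`.
-/

instance : Fact ((0:ℝ) ≤ 1) := ⟨zero_le_one⟩

/-- A `Γ`-semiring structure on additive commutative monoids `S` and `Γ`. -/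
structure GammaSemiring (S Γ : Type*) [AddCommMonoid S] [AddCommMonoid Γ] where
  tmul : S → Γ → S → S
  add_left : ∀ (a b : S) (α : Γ) (c : S), tmul (a + b) α c = tmul a α c + tmul b α c
  add_right : ∀ (a : S) (α : Γ) (b c : S), tmul a α (b + c) = tmul a α b + tmul a α c
  add_mid : ∀ (a : S) (α β : Γ) (b : S), tmul a (α + β) b = tmul a α b + tmul a β b
  tmul_assoc : ∀ (a : S) (α : Γ) (b : S) (β : Γ) (c : S),
    tmul a α (tmul b β c) = tmul (tmul a α b) β c
  zero_left : ∀ (α : Γ) (x : S), tmul 0 α x = 0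
  zero_right : ∀ (x : S) (α : Γ), tmul x α 0 = 0
  zero_mid : ∀ (x y : S), tmul x 0 y = 0

namespace GammaSemiring

variable {S Γ : Type*} [AddCommMonoid S] [AddCommMonoid Γ]

/-- The left translation map `ℓ(x,α) : a ↦ xαa`. -/
def ell (G : GammaSemiring S Γ) (x : S) (α : Γ) : S → S := fun a => G.tmul x α a

/-- Membership in the left operator semiring: the additive closure of the maps `ℓ(x,α)`. -/
inductive InL (G : GammaSemiring S Γ) : (S → S) → Prop
  | basic (x : S) (α : Γ) : InL G (G.ell x α)
  | add {f g : S → S} : InL G f → InL G g → InL G (f + g)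

lemma inL_zero (G : GammaSemiring S Γ) : G.InL (0 : S → S) := by
  have h : G.ell (0 : S) (0 : Γ) = (0 : S → S) := funext fun a => G.zero_left 0 a
  exact h ▸ InL.basic 0 0

lemma InL.comp {G : GammaSemiring S Γ} {f g : S → S} (hf : G.InL f) (hg : G.InL g) :
    G.InL (f ∘ g) := by
  induction hf with
  | basic x α =>
    induction hg with
    | basic y β =>
      have h : G.ell x α ∘ G.ell y β = G.ell (G.tmul x α y) β :=
        funext fun a => G.tmul_assoc x α y β a
      exact h ▸ InL.basic _ _
    | add hg₁ hg₂ ih₁ ih₂ =>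
      rename_i g₁ g₂
      have h : G.ell x α ∘ (g₁ + g₂) = (G.ell x α ∘ g₁) + (G.ell x α ∘ g₂) :=
        funext fun a => G.add_right x α (g₁ a) (g₂ a)
      exact h ▸ InL.add ih₁ ih₂
  | add hf₁ hf₂ ih₁ ih₂ =>
    rename_i f₁ f₂
    have h : (f₁ + f₂) ∘ g = (f₁ ∘ g) + (f₂ ∘ g) := rfl
    exact h ▸ InL.add ih₁ ih₂

/-- The left operator semiring `L` of a `Γ`-semiring, as a type: the subtype of
maps `S → S` belonging to the additive closure of the `ℓ(x,α)`. -/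
def LOp (G : GammaSemiring S Γ) : Type _ := {f : S → S // G.InL f}

/-- The zero element of `L` is the zero map. -/
instance (G : GammaSemiring S Γ) : Zero G.LOp := ⟨⟨0, G.inL_zero⟩⟩

/-- Addition in `L` is pointwise addition of maps. -/
instance (G : GammaSemiring S Γ) : Add G.LOp := ⟨fun f g => ⟨f.1 + g.1, f.2.add g.2⟩⟩

/-- Multiplication in `L` is composition of maps. -/
instance (G : GammaSemiring S Γ) : Mul G.LOp := ⟨fun f g => ⟨f.1 ∘ g.1, f.2.comp g.2⟩⟩

/-- `S` has a left unity `∑ᵢ [eᵢ, δᵢ]`, i.e. `∑ᵢ eᵢ δᵢ a = a` for all `a ∈ S`. -/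
def HasLeftUnity (G : GammaSemiring S Γ) : Prop :=
  ∃ (n : ℕ) (e : Fin n → S) (δ : Fin n → Γ), ∀ a : S, ∑ i, G.tmul (e i) (δ i) a = a

/-- `S` has a right unity `∑ⱼ [γⱼ, fⱼ]`, i.e. `∑ⱼ a γⱼ fⱼ = a` for all `a ∈ S`. -/
def HasRightUnity (G : GammaSemiring S Γ) : Prop :=
  ∃ (n : ℕ) (γ : Fin n → Γ) (f : Fin n → S), ∀ a : S, ∑ j, G.tmul a (γ j) (f j) = a

/-- A fuzzy ideal of the `Γ`-semiring `S`: a `[0,1]`-valued function with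
`σ(0) = 1`, `σ(x+y) ≥ min(σ(x),σ(y))` and `σ(xγy) ≥ max(σ(x),σ(y))`. -/
def IsFuzzyIdeal (G : GammaSemiring S Γ) (sigma : S → unitInterval) : Prop :=
  sigma 0 = 1 ∧ (∀ x y : S, min (sigma x) (sigma y) ≤ sigma (x + y)) ∧
    ∀ (x : S) (γ : Γ) (y : S), max (sigma x) (sigma y) ≤ sigma (G.tmul x γ y)

/-- A fuzzy ideal of the left operator semiring `L`. -/
def IsFuzzyIdealL (G : GammaSemiring S Γ) (mu : G.LOp → unitInterval) : Prop :=
  mu 0 = 1 ∧ (∀ f g : G.LOp, min (mu f) (mu g) ≤ mu (f + g)) ∧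
    ∀ f g : G.LOp, max (mu f) (mu g) ≤ mu (f * g)

/-- A fuzzy subset is non-constant if it takes at least two distinct values. -/
def NonConstant {X : Type*} (mu : X → unitInterval) : Prop := ∃ a b : X, mu a ≠ mu b

/-- `μ⁺(x) = inf_{γ ∈ Γ} μ(ℓ(x,γ))` for a fuzzy subset `μ` of `L`. -/
noncomputable def plus (G : GammaSemiring S Γ) (mu : G.LOp → unitInterval) :
    S → unitInterval :=
  fun x => ⨅ γ : Γ, mu ⟨G.ell x γ, InL.basic x γ⟩

/-- `σ⁺'(f) = inf_{s ∈ S} σ(f(s))` for a fuzzy subset `σ` of `S`. -/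
noncomputable def plusPrime (G : GammaSemiring S Γ) (sigma : S → unitInterval) :
    G.LOp → unitInterval :=
  fun f => ⨅ s : S, sigma (f.1 s)

/-- The sum `μ₁ ⊕ μ₂` of two fuzzy subsets:
`(μ₁ ⊕ μ₂)(x) = sup { min(μ₁(u), μ₂(v)) : u + v = x }`. -/
noncomputable def fuzzySum {X : Type*} [Add X] (mu₁ mu₂ : X → unitInterval) :
    X → unitInterval :=
  fun x => sSup {r : unitInterval | ∃ u v : X, u + v = x ∧ r = min (mu₁ u) (mu₂ v)}

end GammaSemiring
namespace GammaSemiring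

variable {S Γ : Type*} [AddCommMonoid S] [AddCommMonoid Γ]

/-- An ideal of the `Γ`-semiring `S`: a nonempty subset closed under addition and under
multiplication by elements of `S` on either side. -/
def IsIdeal (G : GammaSemiring S Γ) (A : Set S) : Prop :=
  A.Nonempty ∧ (∀ a ∈ A, ∀ b ∈ A, a + b ∈ A) ∧
    ∀ a ∈ A, ∀ (x : S) (γ : Γ), G.tmul x γ a ∈ A ∧ G.tmul a γ x ∈ A

/-- An ideal of the left operator semiring `L`. -/
def IsIdealL (G : GammaSemiring S Γ) (J : Set G.LOp) : Prop :=
  J.Nonempty ∧ (∀ f ∈ J, ∀ g ∈ J, f + g ∈ J) ∧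
    ∀ f ∈ J, ∀ g : G.LOp, f * g ∈ J ∧ g * f ∈ J

/-- `I⁺' = { f ∈ L : f(s) ∈ I for all s ∈ S }` for a subset `I` of `S`. -/
def idealPlusPrime (G : GammaSemiring S Γ) (A : Set S) : Set G.LOp :=
  {f : G.LOp | ∀ s : S, f.1 s ∈ A}

/-- `J⁺ = { a ∈ S : ℓ(a,γ) ∈ J for all γ ∈ Γ }` for a subset `J` of `L`. -/
def idealPlus (G : GammaSemiring S Γ) (J : Set G.LOp) : Set S :=
  {a : S | ∀ γ : Γ, (⟨G.ell a γ, InL.basic a γ⟩ : G.LOp) ∈ J}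

/-- `S` is zero-divisor free: `aαb = 0` implies `a = 0` or `α = 0` or `b = 0`. -/
def ZDF (G : GammaSemiring S Γ) : Prop :=
  ∀ (a : S) (α : Γ) (b : S), G.tmul a α b = 0 → a = 0 ∨ α = 0 ∨ b = 0

/-- `S` is a commutative `Γ`-semiring: `aαb = bαa`. -/
def IsCommutative (G : GammaSemiring S Γ) : Prop :=
  ∀ (a : S) (α : Γ) (b : S), G.tmul a α b = G.tmul b α a

/-- A commutative `Γ`-semiring `S` is a `Γ`-semifield if for all `a ≠ 0` and `α ≠ 0` there
are `b ∈ S`, `β ∈ Γ` with `aαbβd = d` for all `d ∈ S`. -/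
def IsGammaSemifield (G : GammaSemiring S Γ) : Prop :=
  G.IsCommutative ∧ ∀ a : S, a ≠ 0 → ∀ α : Γ, α ≠ 0 →
    ∃ (b : S) (β : Γ), ∀ d : S, G.tmul (G.tmul a α b) β d = d

/-- The `Γₙ`-semiring product on `n × n` matrices:
`(A Δ B) i j = ∑ t ∑ k, (A i t) (Δ t k) (B k j)`. -/
def matTmul (G : GammaSemiring S Γ) {n : ℕ} (A : Matrix (Fin n) (Fin n) S)
    (D : Matrix (Fin n) (Fin n) Γ) (B : Matrix (Fin n) (Fin n) S) :
    Matrix (Fin n) (Fin n) S :=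
  Matrix.of fun i j => ∑ t, ∑ k, G.tmul (A i t) (D t k) (B k j)

/-- A fuzzy ideal of the matrix `Γₙ`-semiring `Sₙ`, defined in the same way as for `S`,
with `Sₙ`, `Γₙ` in place of `S`, `Γ`. -/
def IsFuzzyIdealMatrix (G : GammaSemiring S Γ) {n : ℕ}
    (mu : Matrix (Fin n) (Fin n) S → unitInterval) : Prop :=
  mu 0 = 1 ∧ (∀ A B : Matrix (Fin n) (Fin n) S, min (mu A) (mu B) ≤ mu (A + B)) ∧
    ∀ (A : Matrix (Fin n) (Fin n) S) (D : Matrix (Fin n) (Fin n) Γ)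
      (B : Matrix (Fin n) (Fin n) S), max (mu A) (mu B) ≤ mu (G.matTmul A D B)

end GammaSemiring

open Classical in
/-- The characteristic function of a subset, as a fuzzy subset. -/
noncomputable def fuzzyIndicator {X : Type*} (A : Set X) : X → unitInterval :=
  fun x => if x ∈ A then 1 else 0

/-- `μₙ`, the fuzzy subset of `Sₙ` induced by a fuzzy subset `μ` of `S`:
`μₙ(A) = min { μ(Aᵢⱼ) : 1 ≤ i,j ≤ n }`. -/
noncomputable def matFuzzy {S : Type*} {n : ℕ} (mu : S → unitInterval) :
    Matrix (Fin n) (Fin n) S → unitInterval :=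
  fun A => ⨅ i, ⨅ j, mu (A i j)


variable {S Γ : Type*} [AddCommMonoid S] [AddCommMonoid Γ]


/-- The universal property of the minimum defining `μₙ`. -/
lemma le_matFuzzy_iff {S : Type*} {n : ℕ} [NeZero n] (mu : S → unitInterval)
    (A : Matrix (Fin n) (Fin n) S) (c : unitInterval) :
    c ≤ matFuzzy mu A ↔ ∀ i j, c ≤ mu (A i j) := by
  simp only [matFuzzy, le_iInf_iff]

lemma matFuzzy_le {S : Type*} {n : ℕ} [NeZero n] (mu : S → unitInterval)
    (A : Matrix (Fin n) (Fin n) S) (i j : Fin n) : matFuzzy mu A ≤ mu (A i j) :=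
  (le_matFuzzy_iff mu A _).1 le_rfl i j

/-- A `[0,1]`-valued function that is `1` at `0` and superadditive with respect to `min` takes on
a finite sum at least any common lower bound of its values on the summands. -/
lemma le_apply_sum {M ι : Type*} [AddCommMonoid M] {tau : M → unitInterval} (h0 : tau 0 = 1)
    (hadd : ∀ x y, min (tau x) (tau y) ≤ tau (x + y)) {c : unitInterval} (s : Finset ι)
    (f : ι → M) (hf : ∀ i ∈ s, c ≤ tau (f i)) : c ≤ tau (∑ i ∈ s, f i) :=
  Finset.sum_induction f (fun x => c ≤ tau x)
    (fun x y hx hy => (le_min hx hy).trans (hadd x y)) (h0 ▸ unitInterval.le_one') hf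

namespace GammaSemiring

lemma matTmul_single_left (G : GammaSemiring S Γ) {n : ℕ} (i' a i : Fin n) (e : S) (δ : Γ)
    (A : Matrix (Fin n) (Fin n) S) (r s : Fin n) :
    G.matTmul (Matrix.single i' a e) (Matrix.single a i δ) A r s =
      if r = i' then G.tmul e δ (A i s) else 0 := by
  simp only [matTmul, Matrix.of_apply]
  rw [Finset.sum_eq_single a, Finset.sum_eq_single i]
  · by_cases h : r = i'
    · subst h; simp
    · simp [h, Matrix.single_apply_of_row_ne (Ne.symm h), G.zero_left]
  · intro k _ hk
    rw [Matrix.single_apply_of_col_ne _ _ hk.symm, G.zero_mid]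
  · simp
  · intro t _ ht
    refine Finset.sum_eq_zero fun k _ => ?_
    rw [Matrix.single_apply_of_row_ne ht.symm, G.zero_mid]
  · simp

lemma matTmul_single_right (G : GammaSemiring S Γ) {n : ℕ} (j b j' : Fin n) (γ : Γ) (f : S)
    (A : Matrix (Fin n) (Fin n) S) (r s : Fin n) :
    G.matTmul A (Matrix.single j b γ) (Matrix.single b j' f) r s =
      if s = j' then G.tmul (A r j) γ f else 0 := by
  simp only [matTmul, Matrix.of_apply]
  rw [Finset.sum_eq_single j, Finset.sum_eq_single b]
  · by_cases h : s = j'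
    · subst h; simp
    · simp [h, Matrix.single_apply_of_col_ne _ _ (Ne.symm h), G.zero_right]
  · intro k _ hk
    rw [Matrix.single_apply_of_col_ne _ _ hk.symm, G.zero_mid]
  · simp
  · intro t _ ht
    refine Finset.sum_eq_zero fun k _ => ?_
    rw [Matrix.single_apply_of_row_ne ht.symm, G.zero_mid]
  · simp

/-- Two-sided multiplication by single-entry matrices moves the entry `A i j`, multiplied by the
given elements, to the position `(i', j')` and annihilates all other entries. -/
lemma matTmul_single_single (G : GammaSemiring S Γ) {n : ℕ} (i j i' j' : Fin n) (e f : S)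
    (δ γ : Γ) (A : Matrix (Fin n) (Fin n) S) :
    G.matTmul (G.matTmul (Matrix.single i' i' e) (Matrix.single i' i δ) A)
        (Matrix.single j j' γ) (Matrix.single j' j' f) =
      Matrix.single i' j' (G.tmul (G.tmul e δ (A i j)) γ f) := by
  ext r s
  rw [matTmul_single_right, matTmul_single_left, Matrix.single_apply]
  by_cases hr : r = i' <;> by_cases hs : s = j' <;>
    simp [hr, hs, eq_comm (a := i'), eq_comm (a := j'), G.zero_left]

/-- The matrix with the single entry `A i j`, placed anywhere, lies in the ideal generated by `A`,
so a fuzzy ideal is at least as large there as at `A`. -/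
lemma IsFuzzyIdealMatrix.le_single {G : GammaSemiring S Γ}
    (hLU : G.HasLeftUnity) (hRU : G.HasRightUnity) {n : ℕ}
    {tau : Matrix (Fin n) (Fin n) S → unitInterval} (h : G.IsFuzzyIdealMatrix tau)
    (A : Matrix (Fin n) (Fin n) S) (i j i' j' : Fin n) :
    tau A ≤ tau (Matrix.single i' j' (A i j)) := by
  obtain ⟨h0, hadd, hmul⟩ := h
  obtain ⟨m, e, δ, he⟩ := hLU
  obtain ⟨l, γ, f, hf⟩ := hRU
  have hsum : Matrix.single i' j' (A i j) = ∑ q : Fin l, ∑ p : Fin m,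
      Matrix.single i' j' (G.tmul (G.tmul (e p) (δ p) (A i j)) (γ q) (f q)) := by
    have hp : ∀ q, ∑ p, G.tmul (G.tmul (e p) (δ p) (A i j)) (γ q) (f q) =
        G.tmul (A i j) (γ q) (f q) := fun q => by
      simp only [← G.tmul_assoc]
      exact he _
    simp only [← Matrix.singleAddMonoidHom_apply, ← map_sum, hp, hf]
  rw [hsum]
  refine le_apply_sum h0 hadd _ _ fun q _ => le_apply_sum h0 hadd _ _ fun p _ => ?_
  rw [← matTmul_single_single]
  exact (le_max_right _ _ |>.trans (hmul _ _ A)).trans (le_max_left _ _ |>.trans (hmul _ _ _))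

lemma IsFuzzyIdeal.matFuzzy {G : GammaSemiring S Γ} {n : ℕ} [NeZero n] {mu : S → unitInterval}
    (h : G.IsFuzzyIdeal mu) : G.IsFuzzyIdealMatrix (matFuzzy (n := n) mu) := by
  obtain ⟨h0, hadd, hmul⟩ := h
  refine ⟨le_antisymm unitInterval.le_one' ?_, fun A B => ?_, fun A D B => max_le ?_ ?_⟩
  · exact (le_matFuzzy_iff _ _ _).2 fun i j => h0.ge
  · exact (le_matFuzzy_iff _ _ _).2 fun i j =>
      (min_le_min (matFuzzy_le mu A i j) (matFuzzy_le mu B i j)).trans (hadd _ _)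
  all_goals
    refine (le_matFuzzy_iff _ _ _).2 fun i j => ?_
    rw [matTmul, Matrix.of_apply]
    refine le_apply_sum h0 hadd _ _ fun t _ => le_apply_sum h0 hadd _ _ fun k _ => ?_
  · exact (matFuzzy_le mu A i t).trans ((le_max_left _ _).trans (hmul _ _ _))
  · exact (matFuzzy_le mu B k j).trans ((le_max_right _ _).trans (hmul _ _ _))

end GammaSemiring

/-- For a `Γ`-semiring `S` with left and right unity and `n > 0`, the map
`μ ↦ μₙ`, where `μₙ(A) = min { μ(Aᵢⱼ) }`, is an inclusion-preserving bijection from the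
set of fuzzy ideals of `S` onto the set of fuzzy ideals of the matrix `Γₙ`-semiring `Sₙ`. -/
theorem matrix_fuzzy_bijection (G : GammaSemiring S Γ)
    (hLU : G.HasLeftUnity) (hRU : G.HasRightUnity) (n : ℕ) (hn : 0 < n) :
    (∀ mu : S → unitInterval, G.IsFuzzyIdeal mu →
      G.IsFuzzyIdealMatrix (matFuzzy (n := n) mu)) ∧
    (∀ mu nu : S → unitInterval, G.IsFuzzyIdeal mu → G.IsFuzzyIdeal nu →
      (∀ x : S, mu x ≤ nu x) →
      ∀ A : Matrix (Fin n) (Fin n) S, matFuzzy mu A ≤ matFuzzy nu A) ∧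
    (∀ mu nu : S → unitInterval, G.IsFuzzyIdeal mu → G.IsFuzzyIdeal nu →
      matFuzzy (n := n) mu = matFuzzy (n := n) nu → mu = nu) ∧
    (∀ tau : Matrix (Fin n) (Fin n) S → unitInterval, G.IsFuzzyIdealMatrix tau →
      ∃ mu : S → unitInterval, G.IsFuzzyIdeal mu ∧ matFuzzy (n := n) mu = tau) := by
  have : NeZero n := ⟨hn.ne'⟩
  refine ⟨fun mu h => h.matFuzzy, fun mu nu _ _ hle A => ?_, fun mu nu _ _ heq => ?_,
    fun tau h => ⟨fun x => tau (Matrix.single 0 0 x), ⟨?_, fun x y => ?_, fun x γ y => ?_⟩, ?_⟩⟩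
  · exact (le_matFuzzy_iff _ _ _).2 fun i j => (matFuzzy_le mu A i j).trans (hle _)
  · have hconst : ∀ (ν : S → unitInterval) (x : S),
        matFuzzy (n := n) ν (Matrix.of fun _ _ => x) = ν x := fun ν x =>
      le_antisymm (matFuzzy_le ν _ 0 0) ((le_matFuzzy_iff _ _ _).2 fun _ _ => le_rfl)
    funext x
    rw [← hconst mu x, heq, hconst]
  · simpa using h.1
  · simpa only [Matrix.single_add] using h.2.1 (Matrix.single 0 0 x) (Matrix.single 0 0 y)
  · have hs : G.matTmul (Matrix.single 0 0 x) (Matrix.single 0 0 γ) (Matrix.single 0 0 y) =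
        Matrix.single (0 : Fin n) (0 : Fin n) (G.tmul x γ y) := by
      ext r s
      rw [G.matTmul_single_left]
      by_cases hr : r = 0 <;> by_cases hs : s = 0 <;>
        simp [hr, hs, eq_comm, G.zero_right]
    have := h.2.2 (Matrix.single 0 0 x) (Matrix.single 0 0 γ) (Matrix.single 0 0 y)
    rwa [hs] at this
  · funext A
    refine le_antisymm ?_ ((le_matFuzzy_iff _ _ _).2 fun i j => h.le_single hLU hRU A i j 0 0)
    conv_rhs => rw [Matrix.matrix_eq_sum_single A]
    refine le_apply_sum h.1 h.2.1 _ _ fun i _ => le_apply_sum h.1 h.2.1 _ _ fun j _ => ?_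
    refine (matFuzzy_le _ A i j).trans ?_
    simpa using h.le_single hLU hRU (Matrix.single 0 0 (A i j)) 0 0 i j
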